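/- Let p ≥ 1 and let μ, ν be Borel probability measures on ℝ with finite p-th moments. Then the p-Wasserstein distance equals the L^p distance between the quantile functions: W_p(μ, ν)^p = ∫_0^1 |F_μ^{-1}(τ) − F_ν^{-1}(τ)|^p dτ. -/

import Mathlib

/-!
The infimum is attained by the comonotone coupling, the joint law of
`(F_μ⁻¹(τ), F_ν⁻¹(τ))` for `τ` uniform on `(0, 1)`, whose cost is the right-hand side.

Any coupling `π` satisfies `π {x > t, y ≤ s} ≥ (F_ν s - F_μ t)₊`, and the comonotone coupling
has equality, because `F⁻¹(τ) ≤ x ↔ τ ≤ F x` (`quantileFn_le_iff`, `comonotone_quadrant_le`).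
Now `(x - y - a)₊` is the length of `{t | y ≤ t - a, t < x}`, so by Tonelli its integral is an
integral of such quadrant masses (`lintegral_hinge`) and is minimised by the comonotone coupling.
For `p > 1`, `(u₊)^p = ∫_{a > 0} p (p - 1) a ^ (p - 2) (u - a)₊ da`
(`ofReal_rpow_eq_lintegral`), a positive mixture of hinges, while for `p = 1` the hinge `a = 0`
suffices. Since `|u|^p = (u₊)^p + ((-u)₊)^p`, the comonotone coupling minimises the cost
(`comonotone_cost_le`). These comparisons are made with `ℝ≥0∞`-valued integrals; the moment
hypotheses then give integrability, hence the same comparison for Bochner integrals.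
-/

open MeasureTheory

noncomputable section

/-- A coupling of two Borel probability measures on ℝ: a probability measure on ℝ × ℝ
whose first marginal is `μ` and second marginal is `ν`. -/
def IsCoupling (π : Measure (ℝ × ℝ)) (μ ν : Measure ℝ) : Prop :=
  IsProbabilityMeasure π ∧ π.map Prod.fst = μ ∧ π.map Prod.snd = ν

/-- The set of transport costs `∫ |x - y|^p dπ` over all couplings `π` of `μ` and `ν`. -/
def transportCosts (p : ℝ) (μ ν : Measure ℝ) : Set ℝ :=
  {c | ∃ π : Measure (ℝ × ℝ), IsCoupling π μ ν ∧ c = ∫ xy, |xy.1 - xy.2| ^ p ∂π}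

/-- The `p`-Wasserstein distance between two Borel probability measures on ℝ. -/
def Wp (p : ℝ) (μ ν : Measure ℝ) : ℝ :=
  (sInf (transportCosts p μ ν)) ^ (1 / p)

/-- A measure on ℝ has finite `p`-th moment. -/
def HasFiniteMoment (p : ℝ) (μ : Measure ℝ) : Prop :=
  Integrable (fun x => |x| ^ p) μ

/-- The cumulative distribution function of a measure on ℝ. -/
def cdf (μ : Measure ℝ) (x : ℝ) : ℝ := (μ (Set.Iic x)).toReal

/-- The quantile function of a measure on ℝ: the generalized inverse of its CDF. -/
def quantileFn (μ : Measure ℝ) (τ : ℝ) : ℝ := sInf {x : ℝ | τ ≤ cdf μ x}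

/-! ### The quantile function -/

/-- The Galois connection between quantile function and cdf; right continuity of the cdf
makes the infimum in the definition of the quantile function a minimum. -/
lemma quantileFn_le_iff (μ : Measure ℝ) [IsProbabilityMeasure μ] {τ : ℝ}
    (hτ : τ ∈ Set.Ioo (0 : ℝ) 1) (x : ℝ) : quantileFn μ τ ≤ x ↔ τ ≤ cdf μ x := by
  have hcdf : ∀ x, cdf μ x = ProbabilityTheory.cdf μ x := fun x => by
    rw [ProbabilityTheory.cdf_eq_real]; rfl
  set S : Set ℝ := {x : ℝ | τ ≤ cdf μ x} with hS
  have hne : S.Nonempty := by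
    have h := (ProbabilityTheory.tendsto_cdf_atTop μ).eventually (lt_mem_nhds hτ.2)
    obtain ⟨y, hy⟩ := h.exists
    exact ⟨y, by simpa [hS, hcdf] using hy.le⟩
  have hbdd : BddBelow S := by
    have h := (ProbabilityTheory.tendsto_cdf_atBot μ).eventually (gt_mem_nhds hτ.1)
    obtain ⟨y, hy⟩ := h.exists
    refine ⟨y, fun z hz => ?_⟩
    by_contra! hlt
    have h1 := ProbabilityTheory.monotone_cdf μ hlt.le
    have h2 : τ ≤ ProbabilityTheory.cdf μ z := by simpa [hS, hcdf] using hz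
    linarith
  constructor
  · intro h
    rw [hcdf]
    have hr : Filter.Tendsto (ProbabilityTheory.cdf μ) (nhdsWithin x (Set.Ioi x))
        (nhds (ProbabilityTheory.cdf μ x)) :=
      ((ProbabilityTheory.cdf μ).right_continuous x).mono_left
        (nhdsWithin_mono _ Set.Ioi_subset_Ici_self)
    refine ge_of_tendsto hr ?_
    filter_upwards [self_mem_nhdsWithin] with y hy
    obtain ⟨z, hz, hzy⟩ := exists_lt_of_csInf_lt hne (lt_of_le_of_lt h hy)
    rw [← hcdf]
    refine le_trans hz ?_
    rw [hcdf, hcdf]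
    exact ProbabilityTheory.monotone_cdf μ hzy.le
  · intro h
    exact csInf_le hbdd h

/-- Lebesgue measure on the unit interval. -/
abbrev unitVol : Measure ℝ := volume.restrict (Set.Ioo (0 : ℝ) 1)

instance unitVol_isProbabilityMeasure : IsProbabilityMeasure unitVol :=
  ⟨by simp⟩

lemma aemeasurable_quantileFn (μ : Measure ℝ) [IsProbabilityMeasure μ] :
    AEMeasurable (quantileFn μ) unitVol := by
  refine aemeasurable_restrict_of_monotoneOn measurableSet_Ioo ?_
  intro a ha b hb hab
  rw [quantileFn_le_iff μ ha]
  exact hab.trans ((quantileFn_le_iff μ hb _).1 le_rfl)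

lemma cdf_nonneg' (μ : Measure ℝ) (x : ℝ) : 0 ≤ cdf μ x := ENNReal.toReal_nonneg

lemma cdf_le_one' (μ : Measure ℝ) [IsProbabilityMeasure μ] (x : ℝ) : cdf μ x ≤ 1 :=
  ENNReal.toReal_le_of_le_ofReal zero_le_one (by simpa using prob_le_one)

lemma ofReal_cdf (μ : Measure ℝ) [IsProbabilityMeasure μ] (x : ℝ) :
    ENNReal.ofReal (cdf μ x) = μ (Set.Iic x) :=
  ENNReal.ofReal_toReal (measure_ne_top _ _)

/-- The quantile transform: `quantileFn μ` pushes the uniform law forward to `μ`. -/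
lemma map_quantileFn (μ : Measure ℝ) [IsProbabilityMeasure μ] :
    unitVol.map (quantileFn μ) = μ := by
  have := Measure.isProbabilityMeasure_map (aemeasurable_quantileFn μ)
  refine Measure.ext_of_Iic _ _ fun x => ?_
  rw [Measure.map_apply_of_aemeasurable (aemeasurable_quantileFn μ) measurableSet_Iic,
    Measure.restrict_apply' measurableSet_Ioo]
  have h : quantileFn μ ⁻¹' Set.Iic x ∩ Set.Ioo 0 1 = Set.Iic (cdf μ x) ∩ Set.Ioo 0 1 := by
    ext τ
    simp only [Set.mem_inter_iff, Set.mem_preimage, Set.mem_Iic]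
    exact and_congr_left fun hτ => quantileFn_le_iff μ hτ x
  rw [h, ← ofReal_cdf]
  refine le_antisymm ?_ ?_
  · refine (measure_mono (t := Set.Ioc 0 (cdf μ x)) fun τ hτ => ⟨hτ.2.1, hτ.1⟩).trans ?_
    simp
  · refine le_trans ?_ (measure_mono (s := Set.Ioo 0 (cdf μ x))
      fun τ hτ => ⟨hτ.2.le, hτ.1, hτ.2.trans_le (cdf_le_one' μ x)⟩)
    simp

/-! ### The comonotone coupling -/

/-- The comonotone coupling: the joint law of the two quantile functions. -/
def comonotone (μ ν : Measure ℝ) : Measure (ℝ × ℝ) :=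
  unitVol.map (fun τ => (quantileFn μ τ, quantileFn ν τ))

lemma aemeasurable_pair (μ ν : Measure ℝ) [IsProbabilityMeasure μ] [IsProbabilityMeasure ν] :
    AEMeasurable (fun τ => (quantileFn μ τ, quantileFn ν τ)) unitVol :=
  (aemeasurable_quantileFn μ).prodMk (aemeasurable_quantileFn ν)

lemma isCoupling_comonotone (μ ν : Measure ℝ) [IsProbabilityMeasure μ]
    [IsProbabilityMeasure ν] : IsCoupling (comonotone μ ν) μ ν := by
  refine ⟨Measure.isProbabilityMeasure_map (aemeasurable_pair μ ν), ?_, ?_⟩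
  · rw [comonotone, AEMeasurable.map_map_of_aemeasurable measurable_fst.aemeasurable
      (aemeasurable_pair μ ν)]
    exact map_quantileFn μ
  · rw [comonotone, AEMeasurable.map_map_of_aemeasurable measurable_snd.aemeasurable
      (aemeasurable_pair μ ν)]
    exact map_quantileFn ν

/-- Exchanging the two coordinates turns couplings of `μ, ν` into couplings of `ν, μ`. -/
lemma IsCoupling.swap {π : Measure (ℝ × ℝ)} {μ ν : Measure ℝ} (h : IsCoupling π μ ν) :
    IsCoupling (π.map Prod.swap) ν μ := by
  obtain ⟨h1, h2, h3⟩ := h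
  refine ⟨Measure.isProbabilityMeasure_map measurable_swap.aemeasurable, ?_, ?_⟩
  · rw [Measure.map_map measurable_fst measurable_swap]; exact h3
  · rw [Measure.map_map measurable_snd measurable_swap]; exact h2

lemma comonotone_swap (μ ν : Measure ℝ) [IsProbabilityMeasure μ] [IsProbabilityMeasure ν] :
    (comonotone μ ν).map Prod.swap = comonotone ν μ := by
  rw [comonotone, AEMeasurable.map_map_of_aemeasurable measurable_swap.aemeasurable
    (aemeasurable_pair μ ν)]
  rfl

/-- Every coupling gives the quadrant `{x > t, y ≤ s}` mass at least `F_ν s - F_μ t`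
(and at least `0`), and the comonotone coupling attains this bound. -/
lemma comonotone_quadrant_le {π : Measure (ℝ × ℝ)} {μ ν : Measure ℝ} [IsProbabilityMeasure μ]
    [IsProbabilityMeasure ν] (h : IsCoupling π μ ν) (s t : ℝ) :
    comonotone μ ν (Set.Ioi t ×ˢ Set.Iic s) ≤ π (Set.Ioi t ×ˢ Set.Iic s) := by
  obtain ⟨h1, h2, h3⟩ := h
  have hupper : comonotone μ ν (Set.Ioi t ×ˢ Set.Iic s) ≤ ν (Set.Iic s) - μ (Set.Iic t) := by
    rw [comonotone, Measure.map_apply_of_aemeasurable (aemeasurable_pair μ ν)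
      (measurableSet_Ioi.prod measurableSet_Iic), Measure.restrict_apply' measurableSet_Ioo,
      ← ofReal_cdf, ← ofReal_cdf, ← ENNReal.ofReal_sub _ (cdf_nonneg' μ t), ← Real.volume_Ioc]
    refine measure_mono ?_
    rintro τ ⟨⟨hx, hy⟩, hτ⟩
    refine ⟨?_, (quantileFn_le_iff ν hτ s).1 hy⟩
    by_contra! hle
    exact absurd ((quantileFn_le_iff μ hτ t).2 hle) (not_le.2 hx)
  refine hupper.trans ?_
  rw [tsub_le_iff_right, ← h2, ← h3, Measure.map_apply measurable_fst measurableSet_Iic,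
    Measure.map_apply measurable_snd measurableSet_Iic]
  refine (measure_mono ?_).trans (measure_union_le _ _)
  rintro ⟨x, y⟩ hy
  rcases le_or_gt x t with hx | hx
  · exact Or.inr hx
  · exact Or.inl ⟨hx, hy⟩

/-! ### Comparison of transport costs -/

/-- `(x - y - a)₊` is the length of the set of `t` with `y ≤ t - a` and `t < x`; Tonelli turns
its integral into an integral of quadrant masses. -/
lemma lintegral_hinge (π : Measure (ℝ × ℝ)) [SFinite π] (a : ℝ) :
    ∫⁻ z, ENNReal.ofReal (z.1 - z.2 - a) ∂π
      = ∫⁻ t, π (Set.Ioi t ×ˢ Set.Iic (t - a)) := by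
  set E : Set ((ℝ × ℝ) × ℝ) := {q | q.1.2 + a ≤ q.2 ∧ q.2 < q.1.1} with hE
  have hEm : MeasurableSet E := by
    have m1 : Measurable fun q : (ℝ × ℝ) × ℝ => q.1.2 + a := by fun_prop
    have m2 : Measurable fun q : (ℝ × ℝ) × ℝ => q.1.1 := by fun_prop
    exact (measurableSet_le m1 measurable_snd).inter (measurableSet_lt measurable_snd m2)
  have e1 := Measure.prod_apply (μ := π) (ν := (volume : Measure ℝ)) hEm
  have e2 := Measure.prod_apply_symm (μ := π) (ν := (volume : Measure ℝ)) hEm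
  calc ∫⁻ z, ENNReal.ofReal (z.1 - z.2 - a) ∂π
      = ∫⁻ z, volume (Prod.mk z ⁻¹' E) ∂π := by
        refine lintegral_congr fun z => ?_
        have : Prod.mk z ⁻¹' E = Set.Ico (z.2 + a) z.1 := by ext t; simp [hE]
        rw [this, Real.volume_Ico, sub_sub]
    _ = ∫⁻ t, π ((fun z => (z, t)) ⁻¹' E) := e1.symm.trans e2
    _ = _ := by
        refine lintegral_congr fun t => ?_
        congr 1
        ext z
        simp [hE, and_comm, le_sub_iff_add_le]

/-- For `p > 1`, the function `v ↦ (v₊)^p` is a positive mixture of the hinges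
`v ↦ (v - a)₊`, with density its second derivative `p (p - 1) a ^ (p - 2)`. -/
lemma ofReal_rpow_eq_lintegral {p : ℝ} (hp : 1 < p) (v : ℝ) :
    ENNReal.ofReal v ^ p = ∫⁻ a in Set.Ioi (0 : ℝ),
      ENNReal.ofReal (p * (p - 1) * a ^ (p - 2)) * ENNReal.ofReal (v - a) := by
  rcases le_or_gt v 0 with hv | hv
  · rw [ENNReal.ofReal_of_nonpos hv, ENNReal.zero_rpow_of_pos (by linarith)]
    symm
    rw [setLIntegral_congr_fun (g := fun _ => 0) measurableSet_Ioi]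
    · simp
    · intro a ha
      have ha' : (0 : ℝ) < a := ha
      simp [ENNReal.ofReal_of_nonpos (show v - a ≤ 0 by linarith)]
  have hpp : 0 < p * (p - 1) := mul_pos (by linarith) (by linarith)
  have hsplit : ∫⁻ a in Set.Ioi (0 : ℝ),
      ENNReal.ofReal (p * (p - 1) * a ^ (p - 2)) * ENNReal.ofReal (v - a)
      = ∫⁻ a in Set.Ioc (0 : ℝ) v,
        ENNReal.ofReal (p * (p - 1) * (v * a ^ (p - 2) - a ^ (p - 1))) := by
    rw [← Set.Ioc_union_Ioi_eq_Ioi hv.le, lintegral_union measurableSet_Ioi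
      (Set.Ioc_disjoint_Ioi le_rfl)]
    have hz : ∫⁻ a in Set.Ioi v,
        ENNReal.ofReal (p * (p - 1) * a ^ (p - 2)) * ENNReal.ofReal (v - a) = 0 := by
      rw [setLIntegral_congr_fun (g := fun _ => 0) measurableSet_Ioi]
      · simp
      · intro a ha
        have ha' : v < a := ha
        simp [ENNReal.ofReal_of_nonpos (show v - a ≤ 0 by linarith)]
    rw [hz, add_zero]
    refine setLIntegral_congr_fun measurableSet_Ioc fun a ha => ?_
    have ha0 : 0 < a := ha.1
    have hpow : a ^ (p - 1) = a ^ (p - 2) * a := by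
      rw [← Real.rpow_add_one ha0.ne']; congr 1; ring
    rw [← ENNReal.ofReal_mul (by positivity), hpow]
    congr 1; ring
  have hi1 : IntervalIntegrable (fun a : ℝ => a ^ (p - 2)) volume 0 v :=
    intervalIntegral.intervalIntegrable_rpow' (by linarith)
  have hi2 : IntervalIntegrable (fun a : ℝ => a ^ (p - 1)) volume 0 v :=
    intervalIntegral.intervalIntegrable_rpow' (by linarith)
  have hi : IntervalIntegrable
      (fun a : ℝ => p * (p - 1) * (v * a ^ (p - 2) - a ^ (p - 1))) volume 0 v :=
    ((hi1.const_mul v).sub hi2).const_mul _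
  rw [hsplit, ← ofReal_integral_eq_lintegral_ofReal
    ((intervalIntegrable_iff_integrableOn_Ioc_of_le hv.le).1 hi),
    ← intervalIntegral.integral_of_le hv.le, intervalIntegral.integral_const_mul,
    intervalIntegral.integral_sub (hi1.const_mul v) hi2, intervalIntegral.integral_const_mul,
    integral_rpow (Or.inl (by linarith)), integral_rpow (Or.inl (by linarith)),
    ENNReal.ofReal_rpow_of_pos hv]
  · congr 1
    have e1 : p - 2 + 1 = p - 1 := by ring
    have e2 : p - 1 + 1 = p := by ring
    have hpow : v ^ p = v ^ (p - 1) * v := by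
      rw [← Real.rpow_add_one hv.ne', e2]
    rw [e1, e2, Real.zero_rpow (by linarith), Real.zero_rpow (by linarith), hpow]
    have : p - 1 ≠ 0 := by linarith
    have : p ≠ 0 := by linarith
    field_simp
    ring
  · refine (ae_restrict_iff' measurableSet_Ioc).2 (Filter.Eventually.of_forall fun a ha => ?_)
    have ha0 : 0 < a := ha.1
    have hpow : a ^ (p - 1) = a ^ (p - 2) * a := by
      rw [← Real.rpow_add_one ha0.ne']; congr 1; ring
    have h1 : 0 ≤ a ^ (p - 2) := by positivity
    have h2 : 0 ≤ v - a := sub_nonneg.2 ha.2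
    simp only [Pi.zero_apply]
    rw [hpow]
    have : v * a ^ (p - 2) - a ^ (p - 2) * a = a ^ (p - 2) * (v - a) := by ring
    rw [this]
    positivity

lemma comonotone_hinge_le {π : Measure (ℝ × ℝ)} {μ ν : Measure ℝ} [IsProbabilityMeasure μ]
    [IsProbabilityMeasure ν] (h : IsCoupling π μ ν) (a : ℝ) :
    ∫⁻ z, ENNReal.ofReal (z.1 - z.2 - a) ∂(comonotone μ ν)
      ≤ ∫⁻ z, ENNReal.ofReal (z.1 - z.2 - a) ∂π := by
  have := h.1
  have := (isCoupling_comonotone μ ν).1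
  rw [lintegral_hinge, lintegral_hinge]
  exact lintegral_mono fun t => comonotone_quadrant_le h _ _

lemma lintegral_pos_part_rpow {p : ℝ} (hp : 1 < p) (π : Measure (ℝ × ℝ)) [SFinite π] :
    ∫⁻ z, ENNReal.ofReal (z.1 - z.2) ^ p ∂π = ∫⁻ a in Set.Ioi (0 : ℝ),
      ENNReal.ofReal (p * (p - 1) * a ^ (p - 2)) *
        ∫⁻ z, ENNReal.ofReal (z.1 - z.2 - a) ∂π := by
  simp_rw [ofReal_rpow_eq_lintegral hp]
  rw [lintegral_lintegral_swap (by fun_prop)]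
  refine lintegral_congr fun a => ?_
  rw [lintegral_const_mul _ (by fun_prop)]

lemma comonotone_pos_part_le {p : ℝ} (hp : 1 ≤ p) {π : Measure (ℝ × ℝ)} {μ ν : Measure ℝ}
    [IsProbabilityMeasure μ] [IsProbabilityMeasure ν] (h : IsCoupling π μ ν) :
    ∫⁻ z, ENNReal.ofReal (z.1 - z.2) ^ p ∂(comonotone μ ν)
      ≤ ∫⁻ z, ENNReal.ofReal (z.1 - z.2) ^ p ∂π := by
  have := h.1
  have := (isCoupling_comonotone μ ν).1
  rcases hp.eq_or_lt with rfl | hp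
  · simpa using comonotone_hinge_le h 0
  · rw [lintegral_pos_part_rpow hp, lintegral_pos_part_rpow hp]
    exact lintegral_mono fun a => mul_le_mul_right (comonotone_hinge_le h a) _

lemma lintegral_cost_eq {p : ℝ} (hp : 1 ≤ p) (π : Measure (ℝ × ℝ)) :
    ∫⁻ z, ENNReal.ofReal (|z.1 - z.2| ^ p) ∂π
      = ∫⁻ z, ENNReal.ofReal (z.1 - z.2) ^ p ∂π
        + ∫⁻ z, ENNReal.ofReal (z.1 - z.2) ^ p ∂(π.map Prod.swap) := by
  have hp0 : 0 < p := by linarith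
  rw [lintegral_map (by fun_prop) measurable_swap, ← lintegral_add_left (by fun_prop)]
  refine lintegral_congr fun z => ?_
  simp only [Prod.fst_swap, Prod.snd_swap]
  rw [← ENNReal.ofReal_rpow_of_nonneg (abs_nonneg _) hp0.le]
  rcases le_total z.1 z.2 with hz | hz
  · rw [ENNReal.ofReal_of_nonpos (sub_nonpos.2 hz), ENNReal.zero_rpow_of_pos hp0, zero_add,
      abs_sub_comm, abs_of_nonneg (sub_nonneg.2 hz)]
  · rw [ENNReal.ofReal_of_nonpos (sub_nonpos.2 hz), ENNReal.zero_rpow_of_pos hp0, add_zero,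
      abs_of_nonneg (sub_nonneg.2 hz)]

lemma comonotone_cost_le {p : ℝ} (hp : 1 ≤ p) {π : Measure (ℝ × ℝ)} {μ ν : Measure ℝ}
    [IsProbabilityMeasure μ] [IsProbabilityMeasure ν] (h : IsCoupling π μ ν) :
    ∫⁻ z, ENNReal.ofReal (|z.1 - z.2| ^ p) ∂(comonotone μ ν)
      ≤ ∫⁻ z, ENNReal.ofReal (|z.1 - z.2| ^ p) ∂π := by
  rw [lintegral_cost_eq hp, lintegral_cost_eq hp, comonotone_swap]
  exact add_le_add (comonotone_pos_part_le hp h) (comonotone_pos_part_le hp h.swap)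

/-- Finite `p`-th moments make the cost integrable under every coupling, so that its Bochner
integral is not a junk value. -/
lemma integrable_cost {p : ℝ} (hp : 1 ≤ p) {π : Measure (ℝ × ℝ)} {μ ν : Measure ℝ}
    (hμm : HasFiniteMoment p μ) (hνm : HasFiniteMoment p ν) (h : IsCoupling π μ ν) :
    Integrable (fun z : ℝ × ℝ => |z.1 - z.2| ^ p) π := by
  obtain ⟨-, h2, h3⟩ := h
  have hp0 : 0 < p := by linarith
  have i1 : Integrable (fun z : ℝ × ℝ => |z.1| ^ p) π := by
    rw [HasFiniteMoment, ← h2] at hμm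
    exact hμm.comp_measurable measurable_fst
  have i2 : Integrable (fun z : ℝ × ℝ => |z.2| ^ p) π := by
    rw [HasFiniteMoment, ← h3] at hνm
    exact hνm.comp_measurable measurable_snd
  refine ((i1.add i2).const_mul (2 ^ (p - 1))).mono'
    (Measurable.aestronglyMeasurable (by fun_prop)) (Filter.Eventually.of_forall fun z => ?_)
  rw [Real.norm_of_nonneg (by positivity)]
  calc |z.1 - z.2| ^ p ≤ (|z.1| + |z.2|) ^ p :=
        Real.rpow_le_rpow (abs_nonneg _) (abs_sub _ _) hp0.le
    _ ≤ _ := by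
      exact_mod_cast NNReal.rpow_add_le_mul_rpow_add_rpow ‖z.1‖₊ ‖z.2‖₊ hp

/-- The `p`-Wasserstein distance on ℝ equals the `L^p` distance between the
quantile functions. -/
theorem Wp_eq_quantile_lp (p : ℝ) (hp : 1 ≤ p) (μ ν : Measure ℝ)
    (hμ : IsProbabilityMeasure μ) (hν : IsProbabilityMeasure ν)
    (hμm : HasFiniteMoment p μ) (hνm : HasFiniteMoment p ν) :
    Wp p μ ν ^ p = ∫ τ in Set.Ioo (0 : ℝ) 1, |quantileFn μ τ - quantileFn ν τ| ^ p := by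
  have hp0 : 0 < p := by linarith
  have hcoup := isCoupling_comonotone μ ν
  have hcost : ∫ τ in Set.Ioo (0 : ℝ) 1, |quantileFn μ τ - quantileFn ν τ| ^ p
      = ∫ z, |z.1 - z.2| ^ p ∂(comonotone μ ν) := by
    rw [comonotone, integral_map (aemeasurable_pair μ ν)
      (f := fun z : ℝ × ℝ => |z.1 - z.2| ^ p) (Measurable.aestronglyMeasurable (by fun_prop))]
  have hleast : IsLeast (transportCosts p μ ν) (∫ z, |z.1 - z.2| ^ p ∂(comonotone μ ν)) := by
    refine ⟨⟨_, hcoup, rfl⟩, ?_⟩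
    rintro c ⟨π, hπ, rfl⟩
    have hi0 := integrable_cost hp hμm hνm hcoup
    have hi := integrable_cost hp hμm hνm hπ
    have hnn : ∀ z : ℝ × ℝ, 0 ≤ |z.1 - z.2| ^ p := fun z => by positivity
    rw [← ENNReal.ofReal_le_ofReal_iff (integral_nonneg hnn),
      ofReal_integral_eq_lintegral_ofReal hi0 (Filter.Eventually.of_forall hnn),
      ofReal_integral_eq_lintegral_ofReal hi (Filter.Eventually.of_forall hnn)]
    exact comonotone_cost_le hp hπ
  rw [hcost, Wp, hleast.csInf_eq, one_div,
    Real.rpow_inv_rpow (integral_nonneg fun z => by positivity) hp0.ne']
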